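/- For every integer d ≥ 3, the quotient ring ℂ[m_0,…,m_d]/I_3(H) has Krull dimension 3. -/

import Mathlib

open MvPolynomial

/-- The `3 × d` matrix `H` of the inverse Gaussian moment variety: its first column is
`(m₀², 0, m₁²)ᵀ`, and its `c`-th column, for `2 ≤ c ≤ d`, is
`(m_{c-2}, (2c-3)·m_{c-1}, m_c)ᵀ`.  Columns are indexed by `Fin d`, with `c : Fin d`
corresponding to the paper's column `c + 1`. -/
noncomputable def invGaussMatrix (d : ℕ) :
    Matrix (Fin 3) (Fin d) (MvPolynomial (Fin (d + 1)) ℂ) :=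
  Matrix.of fun r c =>
    if c.val = 0 then
      ![X ⟨0, by omega⟩ ^ 2, 0, X ⟨1, by have := c.isLt; omega⟩ ^ 2] r
    else
      ![X ⟨c.val - 1, by have := c.isLt; omega⟩,
        C (2 * (c.val : ℂ) - 1) * X ⟨c.val, by have := c.isLt; omega⟩,
        X ⟨c.val + 1, by have := c.isLt; omega⟩] r

/-- The ideal `I₃(H)` generated by all `3 × 3` minors of `H`, i.e. determinants of
submatrices obtained by choosing `3` of the `d` columns. -/
noncomputable def invGaussIdeal (d : ℕ) : Ideal (MvPolynomial (Fin (d + 1)) ℂ) :=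
  Ideal.span
    { p | ∃ s : Fin 3 → Fin d, StrictMono s ∧ p = ((invGaussMatrix d).submatrix id s).det }

namespace InvGaussAux

/-- Integral ring extensions do not raise the dimension. -/
lemma dim_le_of_integral {R A : Type*} [CommRing R] [CommRing A] (f : R →+* A)
    (hf : f.IsIntegral) : ringKrullDim A ≤ ringKrullDim R := by
  let _ := f.toAlgebra
  have : Algebra.IsIntegral R A := ⟨hf⟩
  refine Order.krullDim_le_of_strictMono
    (fun P : PrimeSpectrum A => PrimeSpectrum.comap (algebraMap R A) P) ?_
  intro P Q h
  exact Ideal.IsIntegral.comap_lt_comap (R := R) (I := P.asIdeal) (J := Q.asIdeal) h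

section graded
attribute [local instance] MvPolynomial.gradedAlgebra

lemma homogeneousComponent_X_mul {σ : Type*} (j : σ) (q : MvPolynomial σ ℂ) (n : ℕ) :
    homogeneousComponent (n + 1) (X j * q) = X j * homogeneousComponent n q := by
  have := DirectSum.coe_decompose_mul_of_left_mem_of_le (homogeneousSubmodule σ ℂ) (a := X j)
    (b := q) (i := 1) (n := n + 1) (isHomogeneous_X ℂ j) (by omega)
  have h : ∀ (k : ℕ) (p : MvPolynomial σ ℂ),
      (DirectSum.decompose (homogeneousSubmodule σ ℂ) p k : MvPolynomial σ ℂ) =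
        homogeneousComponent k p := fun k p => decomposition.decompose'_apply p k
  rw [h, h] at this
  exact this

/-- Graded Nakayama: finiteness over the subring generated by some variables. -/
lemma finite_of_radical {σ ι A : Type*} [CommRing A] [Finite σ] [Fintype ι] (I : Ideal (MvPolynomial σ ℂ))
    (hI : I.IsHomogeneous (homogeneousSubmodule σ ℂ)) (l : ι → σ)
    (π : MvPolynomial σ ℂ →+* A) (hπ : Function.Surjective π) (hker : ∀ p ∈ I, π p = 0)
    (hrad : idealOfVars σ ℂ ≤ (I ⊔ Ideal.span (Set.range fun j => X (l j))).radical) :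
    (π.comp (rename l : MvPolynomial ι ℂ →ₐ[ℂ] _).toRingHom).Finite := by
  obtain ⟨N, hN⟩ := Ideal.exists_pow_le_of_le_radical_of_fg hrad (idealOfVars_fg σ ℂ)
  set f := π.comp (rename l : MvPolynomial ι ℂ →ₐ[ℂ] _).toRingHom with hf
  let _ := f.toAlgebra
  have hfin : Set.Finite {m : σ →₀ ℕ | m.degree < N} := by
    have := Finsupp.finite_of_degree_le (σ := σ) N
    refine this.subset fun m hm => ?_
    simp only [Set.mem_ofPred_eq] at hm ⊢
    omega
  let G : Set A :=
    (fun m : σ →₀ ℕ => π (monomial m 1)) '' {m | m.degree < N}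
  let M : Submodule (MvPolynomial ι ℂ) A := Submodule.span _ G
  have smulX : ∀ j (y : MvPolynomial σ ℂ), π y ∈ M →
      π (X (l j) * y) ∈ M := by
    intro j y hy
    have := M.smul_mem (X j) hy
    rw [Algebra.smul_def, RingHom.algebraMap_toAlgebra] at this
    simpa [hf] using this
  have smulC : ∀ (c : ℂ) (y : MvPolynomial σ ℂ), π y ∈ M →
      π (C c * y) ∈ M := by
    intro j y hy
    have := M.smul_mem (C j) hy
    rw [Algebra.smul_def, RingHom.algebraMap_toAlgebra] at this
    simpa [hf] using this
  have key : ∀ n (p : MvPolynomial σ ℂ), p.IsHomogeneous n → π p ∈ M := by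
    intro n
    induction n using Nat.strong_induction_on with
    | _ n ih =>
    intro p hp
    by_cases hn : n < N
    · rw [p.as_sum, map_sum]
      refine M.sum_mem fun m hm => ?_
      have hdeg : m.degree = n := by
        rw [Finsupp.degree_eq_weight_one]
        exact hp (mem_support_iff.mp hm)
      have : monomial m (coeff m p) = C (coeff m p) * monomial m 1 := by
        rw [C_mul_monomial, mul_one]
      rw [this]
      exact smulC _ _ (Submodule.subset_span ⟨m, by simpa [hdeg] using hn, rfl⟩)
    · have hpJ : p ∈ I ⊔ Ideal.span (Set.range fun j => (X (l j) : MvPolynomial σ ℂ)) := by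
        apply hN
        rw [mem_pow_idealOfVars_iff]
        intro m hm
        have hdeg : m.degree = n := by
          rw [Finsupp.degree_eq_weight_one]
          exact hp (mem_support_iff.mp hm)
        omega
      obtain ⟨i, hi, q, hq, rfl⟩ := Submodule.mem_sup.mp hpJ
      obtain ⟨c, rfl⟩ := Ideal.mem_span_range_iff_exists_fun.mp hq
      rw [← homogeneousComponent_eq_self hp, map_add, map_add, map_sum, map_sum]
      have h0 : π (homogeneousComponent n i) = 0 :=
        hker _ (homogeneousComponent_mem_of_mem hI hi n)
      rw [h0, zero_add]
      refine M.sum_mem fun j _ => ?_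
      rw [mul_comm]
      rcases n with _ | n
      · have hz : coeff 0 (X (l j) * c j) = 0 := by
          rw [← constantCoeff_eq, map_mul, constantCoeff_X, zero_mul]
        rw [homogeneousComponent_zero, hz, map_zero, map_zero]
        exact M.zero_mem
      · rw [homogeneousComponent_X_mul]
        exact smulX _ _ (ih n (by omega) _ (homogeneousComponent_isHomogeneous _ _))
  have htop : M = ⊤ := by
    rw [eq_top_iff]
    rintro y -
    obtain ⟨p, rfl⟩ := hπ y
    rw [← sum_homogeneousComponent p, map_sum]
    exact M.sum_mem fun j _ => key j _ (homogeneousComponent_isHomogeneous _ _)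
  have : Module.Finite (MvPolynomial ι ℂ) A :=
    ⟨⟨(hfin.image _).toFinset, by rw [Set.Finite.coe_toFinset]; exact htop⟩⟩
  exact this

lemma ideal_homogeneous (d : ℕ) :
    (invGaussIdeal d).IsHomogeneous (homogeneousSubmodule (Fin (d + 1)) ℂ) := by
  refine Ideal.homogeneous_span _ _ ?_
  rintro p ⟨s, -, rfl⟩
  refine ⟨∑ j, (if (s j).val = 0 then 2 else 1), ?_⟩
  rw [Matrix.det_apply]
  refine Submodule.sum_mem _ fun σ _ => ?_
  rw [Units.smul_def]
  refine zsmul_mem ?_ _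
  refine IsHomogeneous.prod _ _ _ fun j _ => ?_
  have hX2 : ∀ i : Fin (d + 1), (X i ^ 2 : MvPolynomial (Fin (d + 1)) ℂ).IsHomogeneous 2 :=
    fun i => isHomogeneous_X_pow i 2
  have hCX : ∀ (c : ℂ) (i : Fin (d + 1)), (C c * X i).IsHomogeneous 1 :=
    fun c i => isHomogeneous_C_mul_X c i
  simp only [Matrix.submatrix_apply, id, invGaussMatrix, Matrix.of_apply]
  generalize σ j = r
  split_ifs with h
  · fin_cases r
    · exact hX2 _
    · exact isHomogeneous_zero _ _ _
    · exact hX2 _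
  · fin_cases r
    · exact isHomogeneous_X _ _
    · exact hCX _ _
    · exact isHomogeneous_X _ _

end graded

/-- Columns of the specialised matrix. -/
noncomputable def col {K : Type*} [CommRing K] [Algebra ℂ K] (a : ℕ → K) (c : ℕ) : Fin 3 → K :=
  if c = 0 then ![a 0 ^ 2, 0, a 1 ^ 2]
  else ![a (c - 1), algebraMap ℂ K (2 * (c : ℂ) - 1) * a c, a (c + 1)]

lemma map_minor {d : ℕ} {K : Type*} [CommRing K] [Algebra ℂ K]
    (φ : MvPolynomial (Fin (d + 1)) ℂ →ₐ[ℂ] K) (a : ℕ → K)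
    (ha : ∀ i : Fin (d + 1), φ (X i) = a i) (s : Fin 3 → Fin d) :
    φ ((invGaussMatrix d).submatrix id s).det =
      (Matrix.of fun r j => col a (s j) r).det := by
  rw [AlgHom.map_det]
  congr 1
  ext r j
  simp only [AlgHom.mapMatrix_apply, Matrix.map_apply, Matrix.submatrix_apply, id, invGaussMatrix,
    Matrix.of_apply, col]
  split_ifs with h
  · fin_cases r <;> simp [ha]
  · fin_cases r <;> simp [ha, algHom_C]

lemma vanish_aux {d : ℕ} (hd : 3 ≤ d) {K : Type*} [Field K] [Algebra ℂ K]
    (φ : MvPolynomial (Fin (d + 1)) ℂ →ₐ[ℂ] K) (a : ℕ → K)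
    (ha : ∀ i : Fin (d + 1), φ (X i) = a i)
    (hφ : ∀ p ∈ invGaussIdeal d, φ p = 0) (h0 : a 0 = 0) :
    ∀ k, k + 2 ≤ d → a k = 0 := by
  have hdet : ∀ k (hk : k + 2 < d), (Matrix.of fun r (j : Fin 3) => col a (k + j.val) r).det = 0 := by
    intro k hk
    let s : Fin 3 → Fin d := fun j => ⟨k + j.val, by omega⟩
    rw [← map_minor φ a ha s]
    refine hφ _ (Ideal.subset_span ⟨s, ?_, rfl⟩)
    intro x y hxy
    simp only [s, Fin.lt_def] at hxy ⊢
    omega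
  intro k
  induction k using Nat.strong_induction_on with
  | _ k ih =>
  intro hk
  rcases k with _ | k
  · exact h0
  have h := hdet k (by omega)
  rw [Matrix.det_fin_three] at h
  rcases k with _ | k
  · simp [col, h0] at h
    have h1 : (algebraMap ℂ K) 2 - 1 ≠ 0 := by
      rw [map_ofNat]
      norm_num
    simp only [zero_add]
    tauto
  · have e1 := ih k (by omega) (by omega)
    have e2 := ih (k + 1) (by omega) (by omega)
    have hc : algebraMap ℂ K (2 * ((k + 1 + 1 : ℕ) : ℂ) - 1) ≠ 0 := by
      rw [Ne, map_eq_zero]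
      intro h
      have h2 : ((2 * (k + 1 + 1) : ℕ) : ℂ) = (1 : ℕ) := by
        push_cast at h ⊢
        linear_combination h
      have := Nat.cast_injective h2
      omega
    simp only [col, Matrix.of_apply] at h
    simp [e1, e2, -map_sub, -map_mul, -map_add, -map_natCast, -Nat.cast_add, -Nat.cast_one,
      -map_eq_zero, -FaithfulSMul.algebraMap_eq_zero_iff] at h
    simp only [add_assoc, Nat.reduceAdd] at h hc ⊢
    tauto

lemma upper (d : ℕ) (hd : 3 ≤ d) :
    ringKrullDim (MvPolynomial (Fin (d + 1)) ℂ ⧸ invGaussIdeal d) ≤ 3 := by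
  let l : Fin 3 → Fin (d + 1) := ![⟨0, by omega⟩, ⟨d - 1, by omega⟩, ⟨d, by omega⟩]
  have hfin := finite_of_radical (invGaussIdeal d) (ideal_homogeneous d) l
    (Ideal.Quotient.mk (invGaussIdeal d)) Ideal.Quotient.mk_surjective
    (fun p hp => Ideal.Quotient.eq_zero_iff_mem.mpr hp) (by
    rw [Ideal.radical_eq_sInf]
    refine le_sInf ?_
    rintro P ⟨hle, hP⟩
    rw [idealOfVars, Ideal.span_le]
    rintro _ ⟨i, rfl⟩
    have hl : ∀ j, X (l j) ∈ P := fun j =>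
      hle (Ideal.mem_sup_right (Ideal.subset_span ⟨j, rfl⟩))
    let K := FractionRing (MvPolynomial (Fin (d + 1)) ℂ ⧸ P)
    let φ : MvPolynomial (Fin (d + 1)) ℂ →ₐ[ℂ] K :=
      (IsScalarTower.toAlgHom ℂ (MvPolynomial (Fin (d + 1)) ℂ ⧸ P) K).comp
        (Ideal.Quotient.mkₐ ℂ P)
    have hφ : ∀ p, φ p = 0 ↔ p ∈ P := by
      intro p
      have : φ p = algebraMap (MvPolynomial (Fin (d + 1)) ℂ ⧸ P) K (Ideal.Quotient.mk P p) := rfl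
      rw [this, FaithfulSMul.algebraMap_eq_zero_iff, Ideal.Quotient.eq_zero_iff_mem]
    let a : ℕ → K := fun n => if h : n < d + 1 then φ (X ⟨n, h⟩) else 0
    have ha : ∀ i : Fin (d + 1), φ (X i) = a i := fun i => by
      simp only [a, dif_pos i.isLt]
    have hv := vanish_aux hd φ a ha
      (fun p hp => (hφ p).mpr (hle (Ideal.mem_sup_left hp)))
      (by
        have := (hφ _).mpr (hl 0)
        rw [ha] at this
        exact this)
    by_cases h : i.val + 2 ≤ d
    · exact (hφ _).mp ((ha i).trans (hv i h))
    · have : i = l 1 ∨ i = l 2 := by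
        simp only [l, Fin.ext_iff]
        simp
        omega
      rcases this with rfl | rfl
      · exact hl 1
      · exact hl 2)
  refine (dim_le_of_integral _ hfin.to_isIntegral).trans ?_
  rw [MvPolynomial.ringKrullDim_of_isNoetherianRing]
  simp

/-- The recursion for the parametrisation of the main component. -/
noncomputable def rec3 {K : Type*} [CommRing K] [Algebra ℂ K] (x b : K) : ℕ → K
  | 0 => 1
  | 1 => x
  | (n + 2) => x ^ 2 * rec3 x b n - b * algebraMap ℂ K (2 * ((n + 1 : ℕ) : ℂ) - 1) * rec3 x b (n + 1)

noncomputable def param (d : ℕ) {K : Type*} [CommRing K] [Algebra ℂ K] (t x b : K) :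
    MvPolynomial (Fin (d + 1)) ℂ →ₐ[ℂ] K :=
  aeval fun i => t * rec3 x b i

lemma map_rec3 {K : Type*} [CommRing K] [Algebra ℂ K] (ψ : K →ₐ[ℂ] K) (x b : K) (n : ℕ) :
    ψ (rec3 x b n) = rec3 (ψ x) (ψ b) n := by
  induction n using Nat.strong_induction_on with
  | _ n ih =>
  match n with
  | 0 => simp [rec3]
  | 1 => simp [rec3]
  | n + 2 =>
    rw [rec3, rec3, map_sub, map_mul, map_mul, map_mul, map_pow, AlgHom.commutes, ih n (by omega),
      ih (n + 1) (by omega)]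

lemma map_param (d : ℕ) {K : Type*} [CommRing K] [Algebra ℂ K] (ψ : K →ₐ[ℂ] K) (t x b : K)
    (p : MvPolynomial (Fin (d + 1)) ℂ) :
    ψ (param d t x b p) = param d (ψ t) (ψ x) (ψ b) p := by
  have : ψ.comp (param d t x b) = param d (ψ t) (ψ x) (ψ b) := by
    ext i
    simp [param, map_rec3]
  exact congrArg (fun g => g p) this

lemma param_ideal (d : ℕ) {K : Type*} [CommRing K] [IsDomain K] [Algebra ℂ K] (t x b : K) :
    invGaussIdeal d ≤ RingHom.ker (param d t x b) := by
  rw [invGaussIdeal, Ideal.span_le]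
  rintro _ ⟨s, -, rfl⟩
  rw [SetLike.mem_coe, RingHom.mem_ker]
  rw [map_minor (param d t x b) (fun i => t * rec3 x b i) (fun i => by simp [param]) s]
  rw [← Matrix.exists_vecMul_eq_zero_iff]
  refine ⟨![-x ^ 2, b, 1], ?_, ?_⟩
  · intro h
    simpa using congrFun h 2
  · ext j
    simp only [Matrix.vecMul, dotProduct, Fin.sum_univ_three, Matrix.of_apply, col]
    generalize (s j).val = c
    rcases c with _ | c
    · simp [rec3]
      ring
    · simp [rec3, -map_sub, -map_add, -map_mul]
      ring

lemma lower_aux (d : ℕ) (hd : 3 ≤ d) {K : Type*} [CommRing K] [IsDomain K] [Algebra ℂ K]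
    (t x b : K) (ht : t ≠ 0) (hx : x ≠ 0) (hb : b ≠ 0) (ψ₁ ψ₂ ψ₃ : K →ₐ[ℂ] K)
    (h1t : ψ₁ t = t) (h1x : ψ₁ x = x) (h1b : ψ₁ b = 0)
    (h2t : ψ₂ t = t) (h2x : ψ₂ x = 0) (h3t : ψ₃ t = 0) :
    3 ≤ ringKrullDim (MvPolynomial (Fin (d + 1)) ℂ ⧸ invGaussIdeal d) := by
  rw [ringKrullDim_quotient]
  let Q : K → K → K → PrimeSpectrum.zeroLocus
      (R := MvPolynomial (Fin (d + 1)) ℂ) (invGaussIdeal d) := fun t x b =>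
    ⟨⟨RingHom.ker (param d t x b), RingHom.ker_isPrime _⟩, param_ideal d t x b⟩
  have hlt : ∀ (ψ : K →ₐ[ℂ] K) (t x b t' x' b' : K) (p : MvPolynomial (Fin (d + 1)) ℂ),
      ψ t = t' → ψ x = x' → ψ b = b' →
      param d t x b p ≠ 0 → param d t' x' b' p = 0 → Q t x b < Q t' x' b' := by
    rintro ψ t x b _ _ _ p rfl rfl rfl h1 h2
    have : RingHom.ker (param d t x b) < RingHom.ker (param d (ψ t) (ψ x) (ψ b)) := by
      refine SetLike.lt_iff_le_and_exists.mpr ⟨?_, p, h2, h1⟩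
      intro q hq
      have hq' : param d t x b q = 0 := hq
      change param d (ψ t) (ψ x) (ψ b) q = 0
      rw [← map_param, hq', map_zero]
    exact this
  have heq : ∀ t x b : K,
      param d t x b (X ⟨0, by omega⟩ * X ⟨2, by omega⟩ - X ⟨1, by omega⟩ ^ 2)
        = - (t ^ 2 * b * x) := by
    intro t x b
    simp only [param, map_sub, map_mul, map_pow, aeval_X, rec3, zero_add, Nat.cast_one, map_one,
      map_ofNat]
    ring
  have h1 : Q t x b < Q t x 0 :=
    hlt ψ₁ t x b t x 0 _ h1t h1x h1b (by rw [heq]; simp [ht, hx, hb]) (by rw [heq]; simp)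
  have h2 : Q t x 0 < Q t 0 0 :=
    hlt ψ₂ t x 0 t 0 0 (X ⟨1, by omega⟩) h2t h2x (map_zero _)
      (by simp [param, rec3, ht, hx]) (by simp [param, rec3])
  have h3 : Q t 0 0 < Q 0 0 0 :=
    hlt ψ₃ t 0 0 0 0 0 (X ⟨0, by omega⟩) h3t (map_zero _) (map_zero _)
      (by simp [param, rec3, ht]) (by simp [param])
  let L : LTSeries (PrimeSpectrum.zeroLocus
      (R := MvPolynomial (Fin (d + 1)) ℂ) (invGaussIdeal d)) :=
    ⟨3, ![Q t x b, Q t x 0, Q t 0 0, Q 0 0 0], by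
      intro i
      fin_cases i
      · exact h1
      · exact h2
      · exact h3⟩
  exact Order.LTSeries.length_le_krullDim L

lemma lower (d : ℕ) (hd : 3 ≤ d) :
    3 ≤ ringKrullDim (MvPolynomial (Fin (d + 1)) ℂ ⧸ invGaussIdeal d) :=
  lower_aux d hd (K := MvPolynomial (Fin 3) ℂ) (X 0) (X 1) (X 2) (X_ne_zero 0) (X_ne_zero 1)
    (X_ne_zero 2) (aeval ![X 0, X 1, 0]) (aeval ![X 0, 0, 0]) (aeval ![0, 0, 0])
    (by simp) (by simp) (by simp) (by simp) (by simp) (by simp)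

end InvGaussAux

/-- For `d ≥ 3`, the quotient ring `ℂ[m₀,…,m_d]/I₃(H)` has Krull dimension `3`. -/
theorem invGauss_krullDim (d : ℕ) (hd : 3 ≤ d) :
    ringKrullDim (MvPolynomial (Fin (d + 1)) ℂ ⧸ invGaussIdeal d) = 3 :=
  le_antisymm (InvGaussAux.upper d hd) (InvGaussAux.lower d hd)
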